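/- Let m ≥ 2 and let L_1,…,L_m be linear orders on a nonempty finite set X. Then the partial order Q = L_1 ∩ ⋯ ∩ L_{m−1} ∩ (L_m)^d is a partial-conjugate of the partial order P = L_1 ∩ ⋯ ∩ L_m. -/

import Mathlib

/-- `P` is a partial order (reflexive, antisymmetric, transitive) on `X`. -/
def IsPartialOrderRel {X : Type*} (P : X → X → Prop) : Prop :=
  (∀ x, P x x) ∧ (∀ x y, P x y → P y x → x = y) ∧ (∀ x y z, P x y → P y z → P x z)

/-- `L` is a linear order (complete, antisymmetric, transitive) on `X`. -/
def IsLinearOrderRel {X : Type*} (L : X → X → Prop) : Prop :=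
  (∀ x y, L x y ∨ L y x) ∧ (∀ x y, L x y → L y x → x = y) ∧ (∀ x y z, L x y → L y z → L x z)

/-- The dual relation: `x P^d y ↔ y P x`. -/
def dualRel {X : Type*} (P : X → X → Prop) : X → X → Prop := fun x y => P y x

/-- Union of two binary relations. -/
def relUnion {X : Type*} (P Q : X → X → Prop) : X → X → Prop := fun x y => P x y ∨ Q x y

/-- `x` and `y` are comparable in `P`. -/
def Compar {X : Type*} (P : X → X → Prop) (x y : X) : Prop := P x y ∨ P y x

/-- `P` and `Q` are conjugate: every pair of distinct elements is comparable
in exactly one of them. -/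
def ConjugateRel {X : Type*} (P Q : X → X → Prop) : Prop :=
  ∀ x y : X, x ≠ y → Xor' (Compar P x y) (Compar Q x y)

/-- `Q` is a partial-conjugate of `P`:
(i) every pair of distinct elements is comparable in at most one of `P`, `Q`;
(ii) `P ∪ Q` is a partial order;
(iii) the transitive closure of `P ∪ Q^d` is a partial order. -/
def IsPartialConjugate {X : Type*} (P Q : X → X → Prop) : Prop :=
  (∀ x y : X, x ≠ y → ¬(Compar P x y ∧ Compar Q x y)) ∧
  IsPartialOrderRel (relUnion P Q) ∧
  IsPartialOrderRel (Relation.TransGen (relUnion P (dualRel Q)))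

/-- The union `P₁ ∪ ⋯ ∪ P_k` (indices from 1 to `k`). -/
def unionUpTo {X : Type*} (Ps : ℕ → X → X → Prop) (k : ℕ) : X → X → Prop :=
  fun x y => ∃ i, 1 ≤ i ∧ i ≤ k ∧ Ps i x y

/-- `Ps 1, …, Ps n` is a sequence of recursive partial-conjugates. -/
def RecPartialConjSeq {X : Type*} (n : ℕ) (Ps : ℕ → X → X → Prop) : Prop :=
  (∀ i, 1 ≤ i → i ≤ n → IsPartialOrderRel (Ps i)) ∧
  (∀ k, 2 ≤ k → k ≤ n - 1 → IsPartialConjugate (unionUpTo Ps (k - 1)) (Ps k)) ∧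
  ConjugateRel (unionUpTo Ps (n - 1)) (Ps n)

/-- `P` is the intersection of `n` linear orders on `X`. -/
def RealizedBy {X : Type*} (n : ℕ) (P : X → X → Prop) : Prop :=
  ∃ L : Fin n → X → X → Prop, (∀ i, IsLinearOrderRel (L i)) ∧
    ∀ x y, P x y ↔ ∀ i, L i x y

/-- The dimension of the poset `(X, P)`: the smallest `n` such that `P` is the
intersection of `n` linear orders. -/
noncomputable def posetDim {X : Type*} (P : X → X → Prop) : ℕ :=
  sInf {n | RealizedBy n P}

/-- `P` is `n`-fold: `n` is the smallest integer such that there is a sequence of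
recursive partial-conjugates `P₁, …, P_n` with `P₁ = P`. -/
def IsNFold {X : Type*} (n : ℕ) (P : X → X → Prop) : Prop :=
  IsLeast {m | ∃ Ps : ℕ → X → X → Prop, RecPartialConjSeq m Ps ∧ Ps 1 = P} n

/-!
Put `R = L₁ ∩ ⋯ ∩ L_{m-1}` and `L = L_m`, so that `P = R ∩ L` and `Q = R ∩ Lᵈ`. As `L` is complete,
`P ∪ Q = R`; and `P` and `Qᵈ` are both contained in `L`, hence so is the transitive closure of
their union, which is therefore antisymmetric.
-/

theorem IsLinearOrderRel.isPartialOrderRel {X : Type*} {L : X → X → Prop}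
    (hL : IsLinearOrderRel L) : IsPartialOrderRel L :=
  ⟨fun x => or_self_iff.mp (hL.1 x x), hL.2⟩

theorem isPartialOrderRel_forall_mem {X ι : Type*} {P : ι → X → X → Prop} {s : Set ι}
    (hs : s.Nonempty) (hP : ∀ i ∈ s, IsPartialOrderRel (P i)) :
    IsPartialOrderRel fun x y => ∀ i ∈ s, P i x y := by
  obtain ⟨j, hj⟩ := hs
  refine ⟨fun x i hi => (hP i hi).1 x, fun x y hxy hyx => ?_, fun x y z hxy hyz i hi => ?_⟩
  · exact (hP j hj).2.1 x y (hxy j hj) (hyx j hj)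
  · exact (hP i hi).2.2 x y z (hxy i hi) (hyz i hi)

theorem isPartialOrderRel_transGen_of_le {X : Type*} {S T : X → X → Prop}
    (hS : ∀ x, S x x) (hT : IsPartialOrderRel T) (hST : S ≤ T) :
    IsPartialOrderRel (Relation.TransGen S) := by
  obtain ⟨-, antisymm, trans⟩ := hT
  have : IsTrans X T := ⟨trans⟩
  have transGen_le : Relation.TransGen S ≤ T := Relation.transGen_minimal hST
  exact ⟨fun x => .single (hS x),
    fun x y hxy hyx => antisymm x y (transGen_le x y hxy) (transGen_le y x hyx),
    fun _ _ _ => .trans⟩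

section InfDual

variable {X : Type*} {R L : X → X → Prop}

theorem eq_of_compar_inf_of_compar_inf_dualRel
    (hR : ∀ x y, R x y → R y x → x = y) (hL : ∀ x y, L x y → L y x → x = y) {x y : X}
    (hP : Compar (R ⊓ L) x y) (hQ : Compar (R ⊓ dualRel L) x y) : x = y := by
  rcases hP with ⟨Rxy, Lxy⟩ | ⟨Ryx, Lyx⟩ <;> rcases hQ with ⟨Rxy', Lyx'⟩ | ⟨Ryx', Lxy'⟩
  · exact hL x y Lxy Lyx'
  · exact hR x y Rxy Ryx'
  · exact hR x y Rxy' Ryx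
  · exact hL x y Lxy' Lyx

theorem relUnion_inf_inf_dualRel (hL : ∀ x y, L x y ∨ L y x) :
    relUnion (R ⊓ L) (R ⊓ dualRel L) = R := by
  ext x y
  exact and_or_left.symm.trans (and_iff_left (hL x y))

theorem relUnion_inf_dualRel_inf_dualRel_le :
    relUnion (R ⊓ L) (dualRel (R ⊓ dualRel L)) ≤ L := by
  rintro x y (⟨-, Lxy⟩ | ⟨-, Lxy⟩) <;> exact Lxy

theorem IsPartialOrderRel.isPartialConjugate_inf_inf_dualRel
    (hR : IsPartialOrderRel R) (hL : IsLinearOrderRel L) :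
    IsPartialConjugate (R ⊓ L) (R ⊓ dualRel L) := by
  have hL' : IsPartialOrderRel L := hL.isPartialOrderRel
  refine ⟨fun x y hne ⟨hP, hQ⟩ => ?_, ?_, ?_⟩
  · exact hne (eq_of_compar_inf_of_compar_inf_dualRel hR.2.1 hL.2.1 hP hQ)
  · rwa [relUnion_inf_inf_dualRel hL.1]
  · exact isPartialOrderRel_transGen_of_le (fun x => .inl ⟨hR.1 x, hL'.1 x⟩) hL'
      relUnion_inf_dualRel_inf_dualRel_le

end InfDual

theorem forall_one_le_le_iff_forall_le_sub_one_and {m : ℕ} (hm : 1 ≤ m) {p : ℕ → Prop} :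
    (∀ i, 1 ≤ i → i ≤ m → p i) ↔ (∀ i, 1 ≤ i → i ≤ m - 1 → p i) ∧ p m := by
  refine ⟨fun h => ⟨fun i h1 hi => h i h1 (by omega), h m hm le_rfl⟩, ?_⟩
  rintro ⟨h, hpm⟩ i h1 hi
  rcases hi.eq_or_lt with rfl | hlt
  · exact hpm
  · exact h i h1 (by omega)

theorem stmt11_general {X : Type*} (m : ℕ) (hm : 2 ≤ m) (L : ℕ → X → X → Prop)
    (hL : ∀ i, 1 ≤ i → i ≤ m - 1 → IsPartialOrderRel (L i)) (hLm : IsLinearOrderRel (L m)) :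
    IsPartialConjugate
      (fun x y => ∀ i, 1 ≤ i → i ≤ m → L i x y)
      (fun x y => (∀ i, 1 ≤ i → i ≤ m - 1 → L i x y) ∧ dualRel (L m) x y) := by
  have isPartialOrderRel_init :
      IsPartialOrderRel fun x y => ∀ i, 1 ≤ i → i ≤ m - 1 → L i x y := by
    simpa only [Set.mem_Icc, and_imp] using
      isPartialOrderRel_forall_mem (s := Set.Icc 1 (m - 1)) ⟨1, le_rfl, by omega⟩
        fun i hi => hL i hi.1 hi.2
  simp only [forall_one_le_le_iff_forall_le_sub_one_and (Nat.one_le_of_lt hm)]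
  exact isPartialOrderRel_init.isPartialConjugate_inf_inf_dualRel hLm

theorem stmt11 {X : Type*} [Fintype X] [Nonempty X]
    (m : ℕ) (hm : 2 ≤ m) (L : ℕ → X → X → Prop)
    (hL : ∀ i, 1 ≤ i → i ≤ m → IsLinearOrderRel (L i)) :
    IsPartialConjugate
      (fun x y => ∀ i, 1 ≤ i → i ≤ m → L i x y)
      (fun x y => (∀ i, 1 ≤ i → i ≤ m - 1 → L i x y) ∧ dualRel (L m) x y) :=
  stmt11_general m hm L (fun i h1 hi => (hL i h1 (by omega)).isPartialOrderRel)
    (hL m (by omega) le_rfl)
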